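/- Let R be a reduced local Cohen–Macaulay ring and I a reflexive ideal of R with regular trace ideal. Then tr_R(I) is reflexive if and only if tr_R(I) = tr_R(End_R(I)). -/

import Mathlib

open IsLocalRing

noncomputable def traceIdeal (R : Type*) [CommRing R] (M : Type*) [AddCommGroup M]
    [Module R M] : Ideal R :=
  ⨆ f : M →ₗ[R] R, LinearMap.range f

def IsCohenMacaulayLocalRing (R : Type*) [CommRing R] [IsLocalRing R] : Prop :=
  ∃ rs : List R, (∀ r ∈ rs, r ∈ maximalIdeal R) ∧ RingTheory.Sequence.IsRegular R rs ∧
    ringKrullDim R = rs.length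

noncomputable def moduleLength (R M : Type*) [CommRing R] [AddCommGroup M] [Module R M] :
    WithBot ℕ∞ :=
  Order.krullDim (Submodule R M)

noncomputable def conductorIdeal (R : Type*) [CommRing R] : Ideal R :=
  Submodule.colon (1 : Submodule R (FractionRing R))
    (Subalgebra.toSubmodule (integralClosure R (FractionRing R)))

def idealIntegralClosure {R : Type*} [CommRing R] (I : Ideal R) : Set R :=
  {x | ∃ n : ℕ, 0 < n ∧ ∃ a : ℕ → R, (∀ i ∈ Finset.Icc 1 n, a i ∈ I ^ i) ∧
    x ^ n + ∑ i ∈ Finset.Icc 1 n, a i * x ^ (n - i) = 0}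

def HasMinimalMultiplicity (R : Type*) [CommRing R] [IsLocalRing R] : Prop :=
  ∃ x : R, (x ∈ maximalIdeal R ∧
      ∃ n : ℕ, maximalIdeal R ^ (n + 1) = Ideal.span {x} * maximalIdeal R ^ n) ∧
    maximalIdeal R ^ 2 = Ideal.span {x} * maximalIdeal R

/-!
Write `T` for the trace ideal of `I`, assumed faithful, and `c : I* ⊗ I → R` for the contraction,
whose image is `T`. Both `T*` and `End I` map naturally to `(I* ⊗ I)*`: the first by composition
with `c`, the second by `φ ↦ (f ⊗ x ↦ f (φ x))`. For reflexive `I` the second map is bijective.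
So is the first: all `w z : I* ⊗ I` satisfy `c w • z = c z • w`, hence `T` annihilates the kernel
of `c` and every functional on `I* ⊗ I` factors through `c`. Thus `End I ≃ T*`, and the identity
corresponds to the inclusion `T → R`. Since the trace ideal of `End I` consists of the values of
functionals on `End I` at the identity, it is the image of `T**` in `R` under evaluation at the
inclusion, and this image is `T` exactly when `T` is reflexive.
-/

open Module
open scoped TensorProduct

theorem dualMap_bijective_of_forall_factorsThrough {R M N : Type*} [CommSemiring R]
    [AddCommMonoid M] [Module R M] [AddCommMonoid N] [Module R N] {p : M →ₗ[R] N}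
    (hp : Function.Surjective p) (h : ∀ B : Dual R M, Function.FactorsThrough B p) :
    Function.Bijective p.dualMap := by
  refine ⟨LinearMap.dualMap_injective_of_surjective hp, fun B ↦ ?_⟩
  have apply_surjInv (m : M) : B (Function.surjInv hp (p m)) = B m :=
    h B (Function.surjInv_eq hp _)
  let g : Dual R N :=
    { toFun n := B (Function.surjInv hp n)
      map_add' := hp.forall₂.2 fun x y ↦ by simp only [← map_add, apply_surjInv]
      map_smul' r := hp.forall.2 fun x ↦ by
        simp only [← map_smul, apply_surjInv, RingHom.id_apply] }
  exact ⟨g, LinearMap.ext apply_surjInv⟩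

section Trace

variable {R M : Type*} [CommRing R] [AddCommGroup M] [Module R M]

theorem apply_mem_traceIdeal (f : Dual R M) (m : M) : f m ∈ traceIdeal R M :=
  Submodule.mem_iSup_of_mem f ⟨m, rfl⟩

theorem traceIdeal_eq_range_contractLeft : traceIdeal R M = (contractLeft R M).range := by
  apply le_antisymm
  · refine iSup_le fun f ↦ ?_
    rintro _ ⟨m, rfl⟩
    exact ⟨f ⊗ₜ m, contractLeft_apply f m⟩
  · rintro _ ⟨w, rfl⟩
    induction w with
    | zero => simp
    | tmul f m => exact apply_mem_traceIdeal f m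
    | add w z hw hz => simpa only [map_add] using add_mem hw hz

theorem traceIdeal_end_eq_range_eval_one :
    traceIdeal R (End R M) = (Dual.eval R (End R M) 1).range := by
  apply le_antisymm
  · refine iSup_le fun G ↦ ?_
    rintro _ ⟨φ, rfl⟩
    exact ⟨G ∘ₗ LinearMap.mulLeft R φ, by simp⟩
  · rintro _ ⟨G, rfl⟩
    exact apply_mem_traceIdeal G 1

variable (R M) in
/-- The contraction `f ⊗ x ↦ f x` with its codomain restricted to its image, the trace ideal. -/
noncomputable def traceContraction : Dual R M ⊗[R] M →ₗ[R] traceIdeal R M :=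
  (contractLeft R M).codRestrict _ fun w ↦
    traceIdeal_eq_range_contractLeft.ge (LinearMap.mem_range_self _ w)

theorem subtype_comp_traceContraction :
    (traceIdeal R M).subtype ∘ₗ traceContraction R M = contractLeft R M :=
  LinearMap.subtype_comp_codRestrict ..

theorem traceContraction_surjective : Function.Surjective (traceContraction R M) := by
  rintro ⟨t, ht⟩
  obtain ⟨w, rfl⟩ := traceIdeal_eq_range_contractLeft.le ht
  exact ⟨w, rfl⟩

variable (R M) in
/-- For reflexive `M`, endomorphisms of `M` are the functionals on `M* ⊗ M`, with `φ` corresponding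
to `f ⊗ x ↦ f (φ x)`. -/
noncomputable def endEquivDualTensor [IsReflexive R M] :
    End R M ≃ₗ[R] Dual R (Dual R M ⊗[R] M) :=
  (evalEquiv R M).congrRight ≪≫ₗ LinearMap.lflip ≪≫ₗ
    TensorProduct.lift.equiv (.id R) (Dual R M) M R

theorem endEquivDualTensor_one [IsReflexive R M] :
    endEquivDualTensor R M 1 = contractLeft R M := by
  ext f x
  rfl

end Trace

section Ideal

variable {R : Type*} [CommRing R] {J : Ideal R}

theorem faithfulSMul_of_mem_nonZeroDivisors {x : R} (hxJ : x ∈ J)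
    (hx : x ∈ nonZeroDivisors R) : FaithfulSMul R J where
  eq_of_smul_eq_smul h :=
    (mul_cancel_right_mem_nonZeroDivisors hx).1 (congrArg Subtype.val (h ⟨x, hxJ⟩))

theorem eq_of_forall_mem_mul_eq_mul [FaithfulSMul R J] {a b : R}
    (h : ∀ t ∈ J, t * a = t * b) : a = b :=
  FaithfulSMul.eq_of_smul_eq_smul (α := J) fun t ↦ Subtype.ext <| by
    simpa [mul_comm] using h t t.2

theorem dual_apply_smul_comm (f : Dual R J) (x y : J) : f x • y = f y • x := by
  have coe_smul_comm : (y : R) • x = (x : R) • y := Subtype.ext (mul_comm ..)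
  ext
  simpa [mul_comm] using congrArg f coe_smul_comm

theorem dual_apply_smul_dual_comm (f g : Dual R J) (x : J) : f x • g = g x • f := by
  ext y
  calc
    f x * g y = g (f x • y) := (map_smul g _ _).symm
    _ = g (f y • x) := by rw [dual_apply_smul_comm]
    _ = g x * f y := by rw [map_smul, smul_eq_mul, mul_comm]

variable (J) in
/-- The double dual of the ideal `J`, realised inside `R` as the image of `J** → R` that evaluates
a functional on `J*` at the inclusion `J → R`. -/
def bidualIdeal : Ideal R :=
  (Dual.eval R (Dual R J) J.subtype).range

theorem le_bidualIdeal : J ≤ bidualIdeal J :=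
  fun x hx ↦ ⟨Dual.eval R J ⟨x, hx⟩, rfl⟩

theorem mul_bidual_apply (F : Dual R (Dual R J)) (f : Dual R J) (x : J) :
    x * F f = f x * F J.subtype :=
  calc
    x * F f = F (J.subtype x • f) := (map_smul F _ _).symm
    _ = F (f x • J.subtype) := by rw [dual_apply_smul_dual_comm]
    _ = f x * F J.subtype := map_smul F _ _

theorem eval_subtype_injective [FaithfulSMul R J] :
    Function.Injective (Dual.eval R (Dual R J) J.subtype) := by
  intro F G hFG
  ext f
  refine eq_of_forall_mem_mul_eq_mul (J := J) fun t ht ↦ ?_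
  calc
    t * F f = f ⟨t, ht⟩ * F J.subtype := mul_bidual_apply F f ⟨t, ht⟩
    _ = f ⟨t, ht⟩ * G J.subtype := congrArg _ hFG
    _ = t * G f := (mul_bidual_apply G f ⟨t, ht⟩).symm

theorem isReflexive_iff_bidualIdeal_eq [FaithfulSMul R J] :
    IsReflexive R J ↔ bidualIdeal J = J := by
  constructor
  · intro _
    refine le_antisymm ?_ le_bidualIdeal
    rintro _ ⟨F, rfl⟩
    obtain ⟨x, rfl⟩ := (bijective_dual_eval R J).surjective F
    exact x.2
  · intro h
    refine ⟨fun x y hxy ↦ Subtype.ext (LinearMap.congr_fun hxy J.subtype), fun F ↦ ?_⟩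
    have hF : F J.subtype ∈ J := h.le ⟨F, rfl⟩
    exact ⟨⟨F J.subtype, hF⟩, eval_subtype_injective rfl⟩

theorem contractLeft_smul_comm (w z : Dual R J ⊗[R] J) :
    contractLeft R J w • z = contractLeft R J z • w := by
  induction w with
  | zero => simp
  | add w₁ w₂ h₁ h₂ => simp only [map_add, add_smul, smul_add, h₁, h₂]
  | tmul f y =>
    induction z with
    | zero => simp
    | add z₁ z₂ h₁ h₂ => simp only [map_add, add_smul, smul_add, h₁, h₂]
    | tmul g x =>
      calc
        f y • g ⊗ₜ[R] x = g ⊗ₜ (f y • x) := (TensorProduct.tmul_smul ..).symm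
        _ = g ⊗ₜ (f x • y) := by rw [dual_apply_smul_comm]
        _ = (f x • g) ⊗ₜ y := (TensorProduct.smul_tmul ..).symm
        _ = (g x • f) ⊗ₜ y := by rw [dual_apply_smul_dual_comm]
        _ = g x • f ⊗ₜ y := TensorProduct.smul_tmul' ..

theorem contractLeft_mul_apply_comm (B : Dual R (Dual R J ⊗[R] J)) (w z : Dual R J ⊗[R] J) :
    contractLeft R J w * B z = contractLeft R J z * B w := by
  simpa only [map_smul, smul_eq_mul] using congrArg B (contractLeft_smul_comm w z)

theorem factorsThrough_traceContraction [FaithfulSMul R (traceIdeal R J)]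
    (B : Dual R (Dual R J ⊗[R] J)) : Function.FactorsThrough B (traceContraction R J) := by
  intro y z hyz
  have contract_eq : contractLeft R J y = contractLeft R J z := congrArg Subtype.val hyz
  refine eq_of_forall_mem_mul_eq_mul (J := traceIdeal R J) fun t ht ↦ ?_
  obtain ⟨w, rfl⟩ := traceIdeal_eq_range_contractLeft.le ht
  rw [contractLeft_mul_apply_comm, contract_eq, contractLeft_mul_apply_comm]

theorem traceContraction_dualMap_bijective [FaithfulSMul R (traceIdeal R J)] :
    Function.Bijective (traceContraction R J).dualMap :=
  dualMap_bijective_of_forall_factorsThrough traceContraction_surjective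
    factorsThrough_traceContraction

variable (J) in
/-- For reflexive `J` with faithful trace ideal `T`, the identification of `End J` with `T*`
obtained by viewing both as the dual of `J* ⊗ J`. -/
noncomputable def endEquivDualTraceIdeal [IsReflexive R J] [FaithfulSMul R (traceIdeal R J)] :
    End R J ≃ₗ[R] Dual R (traceIdeal R J) :=
  endEquivDualTensor R J ≪≫ₗ (LinearEquiv.ofBijective _ traceContraction_dualMap_bijective).symm

theorem endEquivDualTraceIdeal_one [IsReflexive R J] [FaithfulSMul R (traceIdeal R J)] :
    endEquivDualTraceIdeal J 1 = (traceIdeal R J).subtype := by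
  rw [endEquivDualTraceIdeal, LinearEquiv.trans_apply, LinearEquiv.symm_apply_eq,
    endEquivDualTensor_one]
  exact subtype_comp_traceContraction.symm

theorem traceIdeal_end_eq_bidualIdeal_traceIdeal [IsReflexive R J]
    [FaithfulSMul R (traceIdeal R J)] :
    traceIdeal R (End R J) = bidualIdeal (traceIdeal R J) := by
  have eval_eq : Dual.eval R (Dual R (traceIdeal R J)) (traceIdeal R J).subtype =
      Dual.eval R (End R J) 1 ∘ₗ (endEquivDualTraceIdeal J).dualMap.toLinearMap := by
    ext F
    simp [endEquivDualTraceIdeal_one]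
  rw [traceIdeal_end_eq_range_eval_one, bidualIdeal, eval_eq, LinearEquiv.range_comp]

end Ideal

theorem trace_reflexive_iff_trace_eq_trace_of_endomorphisms_general
    {R : Type*} [CommRing R] (I : Ideal R) [IsReflexive R I] [FaithfulSMul R (traceIdeal R I)] :
    IsReflexive R (traceIdeal R I) ↔ traceIdeal R I = traceIdeal R (End R I) := by
  rw [traceIdeal_end_eq_bidualIdeal_traceIdeal, isReflexive_iff_bidualIdeal_eq, eq_comm]

set_option synthInstance.maxHeartbeats 800000 in
/-- Let `R` be a reduced local Cohen–Macaulay ring and `I` a reflexive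
ideal of `R` with regular trace ideal. Then `tr_R(I)` is reflexive if and only if
`tr_R(I) = tr_R(End_R(I))`. -/
theorem trace_reflexive_iff_trace_eq_trace_of_endomorphisms
    (R : Type*) [CommRing R] [IsNoetherianRing R] [IsLocalRing R] [IsReduced R]
    (hCM : IsCohenMacaulayLocalRing R)
    (I : Ideal R) (href : Module.IsReflexive R ↥I)
    (hreg : ∃ x ∈ traceIdeal R ↥I, x ∈ nonZeroDivisors R) :
    Module.IsReflexive R ↥(traceIdeal R ↥I) ↔
      traceIdeal R ↥I = traceIdeal R (Module.End R ↥I) := by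
  obtain ⟨x, hxT, hx⟩ := hreg
  have := faithfulSMul_of_mem_nonZeroDivisors hxT hx
  exact trace_reflexive_iff_trace_eq_trace_of_endomorphisms_general I
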